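/- For every integer l ≥ 6, the largest index j in {1, …, τ} at which d_l(j) = g_l(j) − h_l(j) is negative equals ⌊√l / 2⌋; that is, d_l(j) < 0 for 1 ≤ j ≤ ⌊√l/2⌋ and d_l(j) > 0 for ⌊√l/2⌋ < j ≤ τ, where τ = ⌊l/3⌋. -/

import Mathlib

/-- `h_l(j) = (l+j)/(l-j)` as a rational number. -/
def hFn (l j : ℕ) : ℚ := ((l : ℚ) + j) / ((l : ℚ) - j)

/-- `g_l(j) = ((l+j)^(2j))² / ((l+3j)^(2j) · (l−j)^(2j))` as a rational number, where
`x^(m)` denotes the descending factorial `x(x−1)⋯(x−m+1)`. -/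
def gFn (l j : ℕ) : ℚ :=
  ((Nat.descFactorial (l + j) (2 * j) : ℚ)) ^ 2 /
    ((Nat.descFactorial (l + 3 * j) (2 * j) : ℚ) * (Nat.descFactorial (l - j) (2 * j) : ℚ))

/-- `d_l(j) = g_l(j) − h_l(j)`. -/
def dFn (l j : ℕ) : ℚ := gFn l j - hFn l j

/-!
The quotient `g_{l+1}(j) / g_l(j)` is the rational function `gRatio (l + 1) j`, and `g_l(j) → 1` as
`l → ∞`. A positive function of `l` with limit `1` whose successive quotients all exceed, or all
stay below, those of `g` is therefore a lower, or an upper, bound for `g`. Here `h_l(j)`,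
`gRatio (l + 1) j` and the comparison functions in `barrier (-1) l j ≤ g_l(j) ≤ barrier (-3) l j`
all have the shape `(a + t) / (a - t)`, and comparing two such quotients amounts to a polynomial
inequality. The upper barrier lies below `h` as soon as `4j² ≤ l`. The lower one lies above `h` at
`l = 4j² - 1`, and below that point `g / h` decreases in `l`, so `g > h` persists down to `l = 3j`.
-/

open Asymptotics Filter Topology

section ComparisonPrinciple

variable {K : Type*} [Field K] [LinearOrder K] [IsStrictOrderedRing K] [TopologicalSpace K]
  [OrderTopology K]

theorem le_of_tendsto_of_succ_le_mul {f u r : ℕ → K} {N : ℕ} {a : K} (ha : a ≠ 0)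
    (hf_nonneg : ∀ n ≥ N, 0 ≤ f n) (hu_pos : ∀ n ≥ N, 0 < u n)
    (hf_succ : ∀ n ≥ N, r n * f n ≤ f (n + 1)) (hu_succ : ∀ n ≥ N, u (n + 1) ≤ r n * u n)
    (hf : Tendsto f atTop (𝓝 a)) (hu : Tendsto u atTop (𝓝 a)) {n : ℕ} (hn : N ≤ n) :
    f n ≤ u n := by
  have quot_mono : MonotoneOn (fun n ↦ f n / u n) (Set.Ici N) := by
    refine monotoneOn_nat_Ici_of_le_succ fun n hn ↦ ?_
    rw [div_le_div_iff₀ (hu_pos n hn) (hu_pos (n + 1) (by lia))]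
    calc f n * u (n + 1) ≤ f n * (r n * u n) :=
          mul_le_mul_of_nonneg_left (hu_succ n hn) (hf_nonneg n hn)
      _ = r n * f n * u n := by ring
      _ ≤ f (n + 1) * u n := mul_le_mul_of_nonneg_right (hf_succ n hn) (hu_pos n hn).le
  have quot_tendsto : Tendsto (fun n ↦ f n / u n) atTop (𝓝 1) := by
    simpa only [Pi.div_def, div_self ha] using hf.div hu ha
  refine (div_le_one (hu_pos n hn)).1 (ge_of_tendsto quot_tendsto ?_)
  filter_upwards [eventually_ge_atTop n] with m hm
  exact quot_mono hn (hn.trans hm) hm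

end ComparisonPrinciple

section Cayley

variable {K : Type*} [Field K]

/-- The quotient `(a + t) / (a - t)`, i.e. the Cayley transform of `a / t`, the common shape of
`h_l(j)` and of the functions it is compared with. -/
def cayley (a t : K) : K := (a + t) / (a - t)

/-- The quotient `g_{l+1}(j) / g_l(j)` as a function of `x = l + 1` and `y = j`. -/
def gRatio (x y : K) : K := ((x + y) ^ 3 * (x - 3 * y)) / ((x - y) ^ 3 * (x + 3 * y))

/-- The comparison functions for `g_l(j)`, with `x = l` and `y = j`. The term `x ^ 2 + x` makes the
first arguments at `x` and `x + 1` differ by `2 * (x + 1)`, which cancels a factor in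
`cayley_le_gRatio_mul_cayley` and its converse; `c = -3` gives an upper bound, `c = -1` a lower
one. -/
def barrier (c x y : K) : K := cayley (x ^ 2 + x + c * y ^ 2) (4 * y ^ 3)

theorem cayley_mul_mul_left {s : K} (hs : s ≠ 0) (a t : K) :
    cayley (s * a) (s * t) = cayley a t := by
  simp only [cayley, ← mul_add, ← mul_sub, mul_div_mul_left _ _ hs]

theorem cayley_eq_cayley_four_mul [CharZero K] {y : K} (hy : y ≠ 0) (x : K) :
    cayley x y = cayley (4 * x * y ^ 2) (4 * y ^ 3) := by
  rw [← cayley_mul_mul_left (mul_ne_zero (by norm_num : (4 : K) ≠ 0) (pow_ne_zero 2 hy))]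
  ring_nf

variable [LinearOrder K] [IsStrictOrderedRing K]

theorem cayley_pos {a t : K} (ht : 0 < t) (ha : t < a) : 0 < cayley a t :=
  div_pos (by linarith) (by linarith)

theorem cayley_lt_cayley {a b t : K} (ht : 0 < t) (ha : t < a) (hab : a < b) :
    cayley b t < cayley a t := by
  rw [cayley, cayley, div_lt_div_iff₀ (by linarith) (by linarith)]
  linarith [mul_lt_mul_of_pos_right hab ht]

theorem tendsto_cayley_atTop [TopologicalSpace K] [OrderTopology K] (t : K) :
    Tendsto (fun a ↦ cayley a t) atTop (𝓝 1) := by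
  have h : Tendsto (fun a ↦ 1 + 2 * t / (a - t)) atTop (𝓝 1) := by
    simpa only [add_zero, id, ← sub_eq_add_neg] using
      ((tendsto_atTop_add_const_right _ (-t) tendsto_id).const_div_atTop (2 * t)).const_add 1
  refine h.congr' ?_
  filter_upwards [eventually_gt_atTop t] with a ha
  rw [cayley, one_add_div (sub_pos.2 ha).ne']
  ring

theorem gRatio_pos {x y : K} (hy : 0 < y) (hx : 3 * y < x) : 0 < gRatio x y := by
  have : 0 < x - y := by linarith
  have : 0 < x - 3 * y := by linarith
  have : 0 < x := by linarith
  unfold gRatio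
  positivity

-- The quartic is the `p` for which `gRatio x y = cayley p (-8 * x * y ^ 3)`.
theorem cayley_le_gRatio_mul_cayley {x y a b : K} (hy : 0 < y) (hx : 3 * y < x)
    (ha : 4 * y ^ 3 < a) (hb : 4 * y ^ 3 < b)
    (h : 2 * x * (a * b - 16 * y ^ 6) ≤ (b - a) * (x ^ 4 - 6 * x ^ 2 * y ^ 2 - 3 * y ^ 4)) :
    cayley b (4 * y ^ 3) ≤ gRatio x y * cayley a (4 * y ^ 3) := by
  have hxy : 0 < x - y := by linarith
  have hx0 : 0 < x := by linarith
  rw [cayley, cayley, gRatio, div_mul_div_comm, div_le_div_iff₀ (sub_pos.2 hb)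
    (mul_pos (by positivity) (sub_pos.2 ha))]
  linear_combination 8 * y ^ 3 * h

theorem gRatio_mul_cayley_le_cayley {x y a b : K} (hy : 0 < y) (hx : 3 * y < x)
    (ha : 4 * y ^ 3 < a) (hb : 4 * y ^ 3 < b)
    (h : (b - a) * (x ^ 4 - 6 * x ^ 2 * y ^ 2 - 3 * y ^ 4) ≤ 2 * x * (a * b - 16 * y ^ 6)) :
    gRatio x y * cayley a (4 * y ^ 3) ≤ cayley b (4 * y ^ 3) := by
  have hxy : 0 < x - y := by linarith
  have hx0 : 0 < x := by linarith
  rw [cayley, cayley, gRatio, div_mul_div_comm, div_le_div_iff₀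
    (mul_pos (by positivity) (sub_pos.2 ha)) (sub_pos.2 hb)]
  linear_combination 8 * y ^ 3 * h

theorem four_mul_cube_lt_sq_add_self_add {c x y : K} (hc : -3 ≤ c) (hy : 1 ≤ y)
    (h : 4 * y ^ 2 ≤ x + 1) : 4 * y ^ 3 < x ^ 2 + x + c * y ^ 2 := by
  have hx : 4 * y ^ 2 * (4 * y ^ 2 - 1) ≤ (x + 1) * x :=
    mul_le_mul h (by linarith) (by nlinarith) (by nlinarith)
  have hcy : -3 * y ^ 2 ≤ c * y ^ 2 := mul_le_mul_of_nonneg_right hc (sq_nonneg y)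
  have h23 : y ^ 2 ≤ y ^ 3 := pow_le_pow_right₀ hy (by norm_num)
  have h34 : y ^ 3 ≤ y ^ 4 := pow_le_pow_right₀ hy (by norm_num)
  have h2 : 0 < y ^ 2 := by positivity
  linarith

theorem three_mul_lt_add_one {x y : K} (hy : 1 ≤ y) (h : 4 * y ^ 2 ≤ x + 1) : 3 * y < x + 1 := by
  nlinarith

theorem barrier_pos {c x y : K} (hc : -3 ≤ c) (hy : 1 ≤ y) (h : 4 * y ^ 2 ≤ x + 1) :
    0 < barrier c x y :=
  cayley_pos (by positivity) (four_mul_cube_lt_sq_add_self_add hc hy h)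

theorem tendsto_barrier_atTop [TopologicalSpace K] [OrderTopology K] (c y : K) :
    Tendsto (fun x ↦ barrier c x y) atTop (𝓝 1) :=
  (tendsto_cayley_atTop _).comp <| tendsto_atTop_add_const_right _ _ <|
    (tendsto_pow_atTop two_ne_zero).atTop_add_atTop tendsto_id

theorem barrier_neg_three_succ_le {x y : K} (hy : 1 ≤ y) (h : 4 * y ^ 2 ≤ x + 1) :
    barrier (-3) (x + 1) y ≤ gRatio (x + 1) y * barrier (-3) x y := by
  refine cayley_le_gRatio_mul_cayley (by positivity) (three_mul_lt_add_one hy h)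
    (four_mul_cube_lt_sq_add_self_add le_rfl hy h)
    (four_mul_cube_lt_sq_add_self_add le_rfl hy (by linarith)) ?_
  have hx0 : 0 ≤ x + 1 := by nlinarith
  have hsq : (4 * y ^ 2) ^ 2 ≤ (x + 1) ^ 2 := pow_le_pow_left₀ (by positivity) h 2
  have hcore : 0 ≤ (x + 1) ^ 2 + 16 * y ^ 6 - 12 * y ^ 4 := by
    have : 0 ≤ y ^ 4 := by positivity
    have : 0 ≤ y ^ 6 := by positivity
    linarith
  linear_combination 2 * (x + 1) * hcore

theorem gRatio_mul_barrier_neg_one_le {x y : K} (hy : 1 ≤ y) (h : 4 * y ^ 2 ≤ x + 1) :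
    gRatio (x + 1) y * barrier (-1) x y ≤ barrier (-1) (x + 1) y := by
  refine gRatio_mul_cayley_le_cayley (by positivity) (three_mul_lt_add_one hy h)
    (four_mul_cube_lt_sq_add_self_add (by norm_num) hy h)
    (four_mul_cube_lt_sq_add_self_add (by norm_num) hy (by linarith)) ?_
  have hx0 : 0 ≤ x + 1 := by nlinarith
  have hy2 : 1 ≤ y ^ 2 := one_le_pow₀ hy
  have hsq : (4 * y ^ 2) ^ 2 ≤ (x + 1) ^ 2 := pow_le_pow_left₀ (by positivity) h 2
  have hcore : 0 ≤ (4 * y ^ 2 - 1) * (x + 1) ^ 2 + 4 * y ^ 4 - 16 * y ^ 6 := by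
    have hmul : (4 * y ^ 2 - 1) * (4 * y ^ 2) ^ 2 ≤ (4 * y ^ 2 - 1) * (x + 1) ^ 2 :=
      mul_le_mul_of_nonneg_left hsq (by linarith)
    have h46 : y ^ 4 ≤ y ^ 6 := pow_le_pow_right₀ hy (by norm_num)
    have h4 : 0 ≤ y ^ 4 := by positivity
    linarith
  linear_combination 2 * (x + 1) * hcore

theorem four_mul_cube_lt_four_mul_mul_sq {x y : K} (hy : 0 < y) (h : y < x) :
    4 * y ^ 3 < 4 * x * y ^ 2 := by
  linear_combination 4 * y ^ 2 * h

theorem barrier_neg_three_lt_cayley {x y : K} (hy : 1 ≤ y) (h : 4 * y ^ 2 ≤ x) :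
    barrier (-3) x y < cayley x y := by
  have hy2 : 1 ≤ y ^ 2 := one_le_pow₀ hy
  have hyx : y < x := by linarith [le_self_pow₀ hy two_ne_zero]
  rw [cayley_eq_cayley_four_mul (by positivity)]
  refine cayley_lt_cayley (by positivity) (four_mul_cube_lt_four_mul_mul_sq (by positivity) hyx) ?_
  linarith [mul_nonneg (show 0 ≤ x by linarith) (sub_nonneg.2 h)]

theorem cayley_lt_barrier_neg_one {x y : K} (hy : 1 ≤ y) (h : x + 1 = 4 * y ^ 2) :
    cayley x y < barrier (-1) x y := by
  have hy2 : 1 ≤ y ^ 2 := one_le_pow₀ hy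
  rw [cayley_eq_cayley_four_mul (by positivity)]
  refine cayley_lt_cayley (by positivity)
    (four_mul_cube_lt_sq_add_self_add (by norm_num) hy h.ge) ?_
  linear_combination hy2 + x * h

theorem gRatio_mul_cayley_le_cayley_succ {x y : K} (hy : 1 ≤ y) (hx : 3 * y ≤ x)
    (h : x + 1 ≤ 4 * y ^ 2) : gRatio (x + 1) y * cayley x y ≤ cayley (x + 1) y := by
  have hy0 : 0 < y := by positivity
  rw [cayley_eq_cayley_four_mul hy0.ne', cayley_eq_cayley_four_mul hy0.ne']
  refine gRatio_mul_cayley_le_cayley hy0 (by linarith)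
    (four_mul_cube_lt_four_mul_mul_sq hy0 (by linarith))
    (four_mul_cube_lt_four_mul_mul_sq hy0 (by linarith)) ?_
  have hdiff : 0 ≤ (x + 1) ^ 2 - y ^ 2 :=
    sub_nonneg.2 (pow_le_pow_left₀ hy0.le (by linarith) 2)
  have hcore : 0 ≤ 8 * (x + 1) * y ^ 2 - (x + 1) ^ 2 - 3 * y ^ 2 := by
    have hsq : 0 ≤ (x + 1) * (4 * y ^ 2 - (x + 1)) := mul_nonneg (by linarith) (by linarith)
    have hxy : 0 ≤ x * y ^ 2 := mul_nonneg (by linarith) (sq_nonneg y)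
    linarith [sq_nonneg y]
  linear_combination 4 * y ^ 2 * mul_nonneg hdiff hcore

end Cayley

theorem isEquivalent_descFactorial_add (a k : ℕ) :
    (fun n : ℕ ↦ ((n + a).descFactorial k : ℝ)) ~[atTop] fun n ↦ (n : ℝ) ^ k := by
  have hshift : (fun n : ℕ ↦ ((n + a : ℕ) : ℝ)) ~[atTop] fun n ↦ (n : ℝ) := by
    simp only [Nat.cast_add]
    exact IsEquivalent.refl.add_isLittleO
      (isLittleO_const_left.2 (.inr (tendsto_norm_atTop_atTop.comp tendsto_natCast_atTop_atTop)))
  exact ((isEquivalent_descFactorial k).comp_tendsto (tendsto_add_atTop_nat a)).trans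
    (hshift.pow k)

theorem tendsto_gFn (j : ℕ) : Tendsto (fun l ↦ gFn l j) atTop (𝓝 1) := by
  rw [← tendsto_add_atTop_iff_nat j, Rat.isEmbedding_coe_real.tendsto_nhds_iff, Rat.cast_one]
  have h := ((isEquivalent_descFactorial_add (2 * j) (2 * j)).pow 2).div
    ((isEquivalent_descFactorial_add (4 * j) (2 * j)).mul
      (isEquivalent_descFactorial_add 0 (2 * j)))
  refine isEquivalent_const_iff_tendsto one_ne_zero |>.1 <|
    (h.congr_left (.of_forall fun l ↦ ?_)).congr_right ?_
  · simp only [Pi.div_apply, Pi.pow_apply, Pi.mul_apply, Function.comp_apply, gFn,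
      Nat.add_sub_cancel, add_zero]
    push_cast
    congr 4 <;> ring_nf
  · filter_upwards [eventually_ne_atTop 0] with l hl
    simp only [Pi.div_apply, Pi.pow_apply, Pi.mul_apply]
    rw [← sq, div_self (by positivity), Function.const_apply]

theorem cast_succ_descFactorial {K : Type*} [Field K] [CharZero K] {n k : ℕ} (h : k ≤ n) :
    ((n + 1).descFactorial k : K) = (n + 1) / (n + 1 - k) * n.descFactorial k := by
  have hne : (n + 1 - k : K) ≠ 0 := by
    rw [← Nat.cast_add_one, ← Nat.cast_sub (by lia), Nat.cast_ne_zero]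
    lia
  rw [div_mul_eq_mul_div, eq_div_iff hne, mul_comm, ← Nat.cast_add_one, ← Nat.cast_sub (by lia)]
  exact_mod_cast Nat.succ_descFactorial n k

theorem gFn_pos {l j : ℕ} (h : 3 * j ≤ l) : 0 < gFn l j := by
  have h₁ : 0 < (l + j).descFactorial (2 * j) := Nat.descFactorial_pos.2 (by lia)
  have h₂ : 0 < (l + 3 * j).descFactorial (2 * j) := Nat.descFactorial_pos.2 (by lia)
  have h₃ : 0 < (l - j).descFactorial (2 * j) := Nat.descFactorial_pos.2 (by lia)
  unfold gFn
  positivity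

theorem gFn_succ {l j : ℕ} (h : 3 * j ≤ l) :
    gFn (l + 1) j = gRatio ((l : ℚ) + 1) j * gFn l j := by
  have h₀ : (l + 1 + j : ℚ) ≠ 0 := by positivity
  have h₁ : (l + j + 1 - 2 * j : ℚ) = l + 1 - j := by ring
  have h₂ : (l + 3 * j + 1 - 2 * j : ℚ) = l + 1 + j := by ring
  have h₃ : (l - j + 1 - 2 * j : ℚ) = l + 1 - 3 * j := by ring
  rw [gFn, gFn, gRatio, show l + 1 + j = l + j + 1 by lia,
    show l + 1 + 3 * j = l + 3 * j + 1 by lia, show l + 1 - j = l - j + 1 by lia,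
    cast_succ_descFactorial (by lia), cast_succ_descFactorial (by lia),
    cast_succ_descFactorial (by lia), Nat.cast_sub (by lia)]
  push_cast
  rw [h₁, h₂, h₃]
  field_simp
  ring

theorem hFn_eq_cayley (l j : ℕ) : hFn l j = cayley (l : ℚ) j := rfl

theorem gFn_mem_Icc_barrier {l j : ℕ} (hj : 1 ≤ j) (h : 4 * j ^ 2 ≤ l + 1) :
    gFn l j ∈ Set.Icc (barrier (-1) (l : ℚ) j) (barrier (-3) (l : ℚ) j) := by
  have hjq : (1 : ℚ) ≤ j := mod_cast hj
  have hsq {n : ℕ} (hn : 4 * j ^ 2 - 1 ≤ n) : (4 * j ^ 2 : ℚ) ≤ n + 1 := by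
    exact_mod_cast Nat.sub_le_iff_le_add.1 hn
  have hthree {n : ℕ} (hn : 4 * j ^ 2 - 1 ≤ n) : 3 * j ≤ n :=
    Nat.lt_succ_iff.1 (mod_cast three_mul_lt_add_one hjq (hsq hn))
  have g_pos (n : ℕ) (hn : 4 * j ^ 2 - 1 ≤ n) : 0 < gFn n j := gFn_pos (hthree hn)
  have g_succ (n : ℕ) (hn : 4 * j ^ 2 - 1 ≤ n) := gFn_succ (hthree hn)
  have barrier_tendsto (c : ℚ) : Tendsto (fun n : ℕ ↦ barrier c (n : ℚ) j) atTop (𝓝 1) :=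
    (tendsto_barrier_atTop c _).comp tendsto_natCast_atTop_atTop
  have hl : 4 * j ^ 2 - 1 ≤ l := Nat.sub_le_iff_le_add.2 h
  constructor
  · refine le_of_tendsto_of_succ_le_mul (r := fun n ↦ gRatio ((n : ℚ) + 1) j) one_ne_zero
      (fun n hn ↦ (barrier_pos (by norm_num) hjq (hsq hn)).le) g_pos (fun n hn ↦ ?_)
      (fun n hn ↦ (g_succ n hn).le) (barrier_tendsto (-1)) (tendsto_gFn j) hl
    simpa only [Nat.cast_add_one] using gRatio_mul_barrier_neg_one_le hjq (hsq hn)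
  · refine le_of_tendsto_of_succ_le_mul (r := fun n ↦ gRatio ((n : ℚ) + 1) j) one_ne_zero
      (fun n hn ↦ (g_pos n hn).le) (fun n hn ↦ barrier_pos le_rfl hjq (hsq hn))
      (fun n hn ↦ (g_succ n hn).ge) (fun n hn ↦ ?_) (tendsto_gFn j) (barrier_tendsto (-3)) hl
    simpa only [Nat.cast_add_one] using barrier_neg_three_succ_le hjq (hsq hn)

theorem dFn_neg {l j : ℕ} (hj : 1 ≤ j) (h : 4 * j ^ 2 ≤ l) : dFn l j < 0 :=
  sub_neg.2 <| (gFn_mem_Icc_barrier hj (by lia)).2.trans_lt <|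
    barrier_neg_three_lt_cayley (mod_cast hj) (mod_cast h)

theorem dFn_pos_of_add_one_eq {l j : ℕ} (hj : 1 ≤ j) (h : l + 1 = 4 * j ^ 2) : 0 < dFn l j :=
  sub_pos.2 <| (cayley_lt_barrier_neg_one (mod_cast hj) (mod_cast h)).trans_le <|
    (gFn_mem_Icc_barrier hj h.ge).1

theorem dFn_pos_of_succ {l j : ℕ} (hj : 1 ≤ j) (h₃ : 3 * j ≤ l) (h : l + 1 ≤ 4 * j ^ 2)
    (hsucc : 0 < dFn (l + 1) j) : 0 < dFn l j := by
  have hjq : (1 : ℚ) ≤ j := mod_cast hj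
  have hlj : (3 * j : ℚ) ≤ l := mod_cast h₃
  refine sub_pos.2 <| lt_of_mul_lt_mul_left ?_
    (gRatio_pos (x := (l : ℚ) + 1) (y := (j : ℚ)) (by positivity) (by linarith)).le
  calc gRatio ((l : ℚ) + 1) j * hFn l j
      ≤ hFn (l + 1) j := by
        simpa only [hFn_eq_cayley, Nat.cast_add_one] using
          gRatio_mul_cayley_le_cayley_succ hjq hlj (mod_cast h)
    _ < gFn (l + 1) j := sub_pos.1 hsucc
    _ = gRatio ((l : ℚ) + 1) j * gFn l j := gFn_succ h₃

theorem dFn_pos {l j : ℕ} (h₃ : 3 * j ≤ l) (h : l < 4 * j ^ 2) : 0 < dFn l j := by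
  have hj : 1 ≤ j := by
    by_contra! hj
    simp_all
  induction Nat.le_sub_one_of_lt h using Nat.decreasingInduction with
  | self => exact dFn_pos_of_add_one_eq hj (by lia)
  | of_succ l hl ih => exact dFn_pos_of_succ hj h₃ (by lia) (ih (by lia) (by lia))

theorem le_floor_sqrt_div_two_iff {l j : ℕ} : j ≤ ⌊Real.sqrt l / 2⌋₊ ↔ 4 * j ^ 2 ≤ l := by
  rw [Nat.floor_div_ofNat, Real.nat_floor_real_sqrt_eq_nat_sqrt, Nat.le_div_iff_mul_le two_pos,
    Nat.le_sqrt', mul_pow, mul_comm, Nat.pow_two 2]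

/-- For every integer `l ≥ 6`, with `τ = ⌊l/3⌋`, the largest `j ∈ {1, …, τ}` with
`d_l(j) < 0` equals `⌊√l/2⌋`: indeed `d_l(j) < 0` for `1 ≤ j ≤ ⌊√l/2⌋` and `d_l(j) > 0`
for `⌊√l/2⌋ < j ≤ τ`. -/
theorem stmt14 (l : ℕ) (hl : 6 ≤ l) :
    (∀ j : ℕ, 1 ≤ j → j ≤ ⌊Real.sqrt l / 2⌋₊ → dFn l j < 0) ∧
    (∀ j : ℕ, ⌊Real.sqrt l / 2⌋₊ < j → j ≤ l / 3 → 0 < dFn l j) := by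
  refine ⟨fun j hj hle ↦ dFn_neg hj (le_floor_sqrt_div_two_iff.1 hle), fun j hlt hle ↦ ?_⟩
  exact dFn_pos (by lia) (lt_of_not_ge fun h ↦ hlt.not_ge (le_floor_sqrt_div_two_iff.2 h))
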